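/- arXiv:1707.08199 — 3 statements merged into one kernel-verified Lean document; each statement's English description precedes it below -/
import Mathlib

section
/- For every A ∈ [0, |Ω|], the function α ↦ Λ(α,A) is non-decreasing on (0,∞) and is Lipschitz continuous with Lipschitz constant A/|Ω|: for all α₁, α₂ > 0 one has |Λ(α₁,A) − Λ(α₂,A)| ≤ (A/|Ω|)·|α₁ − α₂|. -/
open MeasureTheory ENNReal

noncomputable section

/-- The Euclidean Laplacian `Δu` of a function `u : ℝⁿ → ℝ`. -/
def lap {n : ℕ} (u : EuclideanSpace ℝ (Fin n) → ℝ) (x : EuclideanSpace ℝ (Fin n)) : ℝ :=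
  ∑ i : Fin n, iteratedFDeriv ℝ 2 u x ![EuclideanSpace.single i 1, EuclideanSpace.single i 1]

/-- Smooth compactly supported test functions on `Ω`, not identically zero. -/
def TestFun {n : ℕ} (Ω : Set (EuclideanSpace ℝ (Fin n)))
    (u : EuclideanSpace ℝ (Fin n) → ℝ) : Prop :=
  ContDiff ℝ (⊤ : ℕ∞) u ∧ HasCompactSupport u ∧ tsupport u ⊆ Ω ∧ u ≠ 0

/-- The generalized composite plate eigenvalue
`Λ(α,A) = inf_S inf_u (∫_Ω (Δu)² + α ∫_S u²) / ∫_Ω u²`,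
the infima being over measurable `S ⊆ Ω` with `|S| = A` and over smooth compactly
supported `u : Ω → ℝ`, `u ≢ 0`. -/
def Lam {n : ℕ} (Ω : Set (EuclideanSpace ℝ (Fin n))) (α A : ℝ) : ℝ :=
  sInf { r : ℝ | ∃ S : Set (EuclideanSpace ℝ (Fin n)), MeasurableSet S ∧ S ⊆ Ω ∧
      volume S = ENNReal.ofReal A ∧
      ∃ u : EuclideanSpace ℝ (Fin n) → ℝ, TestFun Ω u ∧
        r = ((∫ x in Ω, lap u x ^ 2) + α * ∫ x in S, u x ^ 2) / ∫ x in Ω, u x ^ 2 }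

/-!
For fixed `(S, u)` the quotient is affine in `α`, with slope `∫_S u² / ∫_Ω u² ≥ 0`; an infimum of
such functions is non-decreasing. By the bathtub principle, every `u` admits a competitor `S'` with
`|S'| = A` made of the lowest values of `u²` on `Ω`, so that `∫_{S'} u² ≤ (A / |Ω|) ∫_Ω u²`. When
`α ≥ 0`, replacing `S` by `S'` if this lowers the slope does not increase the quotient, so only
slopes at most `A / |Ω|` matter.
-/

section Bathtub

variable {X : Type*} [MeasurableSpace X] {μ : Measure X}

theorem exists_measure_lt_le_and_le_measure_le {α : Type*} [CompleteLinearOrder α]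
    [DenselyOrdered α] [TopologicalSpace α] [OrderTopology α] [FirstCountableTopology α]
    [MeasurableSpace α] [OpensMeasurableSpace α] [IsFiniteMeasure μ] {f : X → α}
    (hf : Measurable f) {a : ℝ≥0∞} (ha : a ≤ μ Set.univ) :
    ∃ t : α, μ {x | f x < t} ≤ a ∧ a ≤ μ {x | f x ≤ t} := by
  set T : Set α := {t | a ≤ μ (f ⁻¹' Set.Iic t)}
  have hT : T.Nonempty := ⟨⊤, by simpa [T] using ha⟩
  refine ⟨sInf T, ?_, ?_⟩
  · rcases eq_bot_or_bot_lt (sInf T) with hbot | hbot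
    · simp [hbot]
    obtain ⟨s, hs_mono, hs_lt, hs_tendsto⟩ := exists_seq_strictMono_tendsto' hbot
    have hunion : {x | f x < sInf T} = ⋃ k, f ⁻¹' Set.Iic (s k) := by
      rw [← Set.preimage_iUnion,
        iUnion_Iic_eq_Iio_of_lt_of_tendsto (fun k => (hs_lt k).2) hs_tendsto]
      rfl
    have hmono : Monotone fun k => f ⁻¹' Set.Iic (s k) := fun _ _ hkl =>
      Set.preimage_mono (Set.Iic_subset_Iic.2 (hs_mono.monotone hkl))
    rw [hunion, hmono.measure_iUnion]
    exact iSup_le fun k => (not_le.1 fun hk => (hs_lt k).2.not_ge (sInf_le hk)).le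
  · obtain ⟨s, hs_anti, hs_tendsto, hs_mem⟩ := exists_seq_tendsto_sInf hT (OrderBot.bddBelow T)
    have hinter : {x | f x ≤ sInf T} = ⋂ k, f ⁻¹' Set.Iic (s k) := by
      rw [← Set.preimage_iInter, ← Set.Iic_iInf, iInf_eq_of_tendsto hs_anti hs_tendsto]
      rfl
    have hanti : Antitone fun k => f ⁻¹' Set.Iic (s k) := fun _ _ hkl =>
      Set.preimage_mono (Set.Iic_subset_Iic.2 (hs_anti hkl))
    rw [hinter, hanti.measure_iInter
      (fun k => (hf measurableSet_Iic).nullMeasurableSet) ⟨0, measure_ne_top _ _⟩]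
    exact le_iInf hs_mem

theorem measure_mul_setLIntegral_le_of_le_of_ge {S Ω : Set X} (hS : MeasurableSet S)
    (hΩ : MeasurableSet Ω) (hSΩ : S ⊆ Ω) {f : X → ℝ≥0∞} {t : ℝ≥0∞} (hfS : ∀ x ∈ S, f x ≤ t)
    (hfΩ : ∀ x ∈ Ω \ S, t ≤ f x) :
    μ Ω * ∫⁻ x in S, f x ∂μ ≤ μ S * ∫⁻ x in Ω, f x ∂μ := by
  have hupper : ∫⁻ x in S, f x ∂μ ≤ t * μ S := by
    simpa only [setLIntegral_const] using setLIntegral_mono' hS hfS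
  have hlower : t * μ (Ω \ S) ≤ ∫⁻ x in Ω \ S, f x ∂μ := by
    simpa only [setLIntegral_const] using setLIntegral_mono' (hΩ.diff hS) hfΩ
  calc μ Ω * ∫⁻ x in S, f x ∂μ
      = μ S * ∫⁻ x in S, f x ∂μ + μ (Ω \ S) * ∫⁻ x in S, f x ∂μ := by
        rw [← measure_inter_add_sdiff Ω hS, Set.inter_eq_right.2 hSΩ, add_mul]
    _ ≤ μ S * ∫⁻ x in S, f x ∂μ + μ (Ω \ S) * (t * μ S) := by gcongr
    _ = μ S * ∫⁻ x in S, f x ∂μ + μ S * (t * μ (Ω \ S)) := by ring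
    _ ≤ μ S * ∫⁻ x in S, f x ∂μ + μ S * ∫⁻ x in Ω \ S, f x ∂μ := by gcongr
    _ = μ S * ∫⁻ x in Ω, f x ∂μ := by
        rw [← mul_add, ← lintegral_inter_add_sdiff f Ω hS, Set.inter_eq_right.2 hSΩ]

variable [MeasurableSpace.CountablySeparated X] [NullSingletonClass μ]

theorem exists_subset_measure_eq {P : Set X} (hP : MeasurableSet P) (hP_fin : μ P ≠ ∞)
    {a : ℝ≥0∞} (ha : a ≤ μ P) : ∃ T ⊆ P, MeasurableSet T ∧ μ T = a := by
  -- Fibres of an injective function are null, so its sublevel sets realise every measure.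
  obtain ⟨g, hg, hg_inj⟩ : ∃ g : X → EReal, Measurable g ∧ Function.Injective g := by
    obtain ⟨h, hh, hh_inj⟩ :=
      MeasurableSpace.measurable_injection_nat_bool_of_countablySeparated X
    have hemb := measurableEmbedding_embeddingReal (ℕ → Bool)
    exact ⟨fun x => (embeddingReal (ℕ → Bool) (h x) : EReal),
      measurable_coe_real_ereal.comp (hemb.measurable.comp hh),
      EReal.coe_injective.comp (hemb.injective.comp hh_inj)⟩
  have : IsFiniteMeasure (μ.restrict P) := isFiniteMeasure_restrict.2 hP_fin
  obtain ⟨t, hlt, hle⟩ := exists_measure_lt_le_and_le_measure_le (μ := μ.restrict P) hg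
    (ha.trans_eq (Measure.restrict_apply_univ P).symm)
  have hle_meas : MeasurableSet {x | g x ≤ t} := hg measurableSet_Iic
  refine ⟨{x | g x ≤ t} ∩ P, Set.inter_subset_right, hle_meas.inter hP, ?_⟩
  rw [← Measure.restrict_apply hle_meas]
  refine le_antisymm ?_ hle
  have hfibre : (μ.restrict P) {x | g x = t} = 0 :=
    Set.Subsingleton.measure_zero (fun x hx y hy => hg_inj (hx.trans hy.symm)) _
  calc (μ.restrict P) {x | g x ≤ t}
      = (μ.restrict P) ({x | g x < t} ∪ {x | g x = t}) := by
        simp only [le_iff_lt_or_eq, Set.ofPred_or]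
    _ ≤ (μ.restrict P) {x | g x < t} + (μ.restrict P) {x | g x = t} := measure_union_le _ _
    _ ≤ a := by rwa [hfibre, add_zero]

theorem exists_between_measure_eq {D E : Set X} (hD : MeasurableSet D) (hE : MeasurableSet E)
    (hDE : D ⊆ E) (hE_fin : μ E ≠ ∞) {a : ℝ≥0∞} (hDa : μ D ≤ a) (haE : a ≤ μ E) :
    ∃ S, D ⊆ S ∧ S ⊆ E ∧ MeasurableSet S ∧ μ S = a := by
  have hgap : a - μ D ≤ μ (E \ D) :=
    (tsub_le_tsub_right haE _).trans le_measure_sdiff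
  obtain ⟨T, hT_sub, hT, hT_eq⟩ := exists_subset_measure_eq (hE.diff hD)
    (measure_ne_top_of_subset Set.sdiff_subset hE_fin) hgap
  refine ⟨D ∪ T, Set.subset_union_left,
    Set.union_subset hDE (hT_sub.trans Set.sdiff_subset), hD.union hT, ?_⟩
  rw [measure_union (Set.disjoint_sdiff_right.mono_right hT_sub) hT, hT_eq,
    add_tsub_cancel_of_le hDa]

theorem exists_subset_measure_mul_setLIntegral_le {Ω : Set X} (hΩ : MeasurableSet Ω)
    (hΩ_fin : μ Ω ≠ ∞) {f : X → ℝ≥0∞} (hf : Measurable f) {a : ℝ≥0∞} (ha : a ≤ μ Ω) :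
    ∃ S ⊆ Ω, MeasurableSet S ∧ μ S = a ∧
      μ Ω * ∫⁻ x in S, f x ∂μ ≤ a * ∫⁻ x in Ω, f x ∂μ := by
  have : IsFiniteMeasure (μ.restrict Ω) := isFiniteMeasure_restrict.2 hΩ_fin
  obtain ⟨t, hlt, hle⟩ := exists_measure_lt_le_and_le_measure_le (μ := μ.restrict Ω) hf
    (ha.trans_eq (Measure.restrict_apply_univ Ω).symm)
  have hlt_meas : MeasurableSet {x | f x < t} := hf measurableSet_Iio
  have hle_meas : MeasurableSet {x | f x ≤ t} := hf measurableSet_Iic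
  rw [Measure.restrict_apply hlt_meas] at hlt
  rw [Measure.restrict_apply hle_meas] at hle
  obtain ⟨S, hlt_sub, hsub_le, hS, rfl⟩ := exists_between_measure_eq (hlt_meas.inter hΩ)
    (hle_meas.inter hΩ) (Set.inter_subset_inter_left _ fun x (hx : f x < t) => hx.le)
    (measure_ne_top_of_subset Set.inter_subset_right hΩ_fin) hlt hle
  have hSΩ : S ⊆ Ω := hsub_le.trans Set.inter_subset_right
  exact ⟨S, hSΩ, hS, rfl, measure_mul_setLIntegral_le_of_le_of_ge hS hΩ hSΩ
    (fun x hx => (hsub_le hx).1) fun x hx => not_lt.1 fun h => hx.2 (hlt_sub ⟨h, hx.1⟩)⟩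

theorem exists_subset_measureReal_mul_setIntegral_le {Ω : Set X} (hΩ : MeasurableSet Ω)
    (hΩ_fin : μ Ω ≠ ∞) {f : X → ℝ} (hf : Measurable f) (hf_nonneg : 0 ≤ f)
    (hf_int : IntegrableOn f Ω μ) {A : ℝ} (hA : 0 ≤ A) (hAΩ : A ≤ μ.real Ω) :
    ∃ S ⊆ Ω, MeasurableSet S ∧ μ S = ENNReal.ofReal A ∧
      μ.real Ω * ∫ x in S, f x ∂μ ≤ A * ∫ x in Ω, f x ∂μ := by
  have hofReal : ∀ s ⊆ Ω, ENNReal.ofReal (∫ x in s, f x ∂μ) = ∫⁻ x in s, ENNReal.ofReal (f x) ∂μ :=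
    fun s hs => ofReal_integral_eq_lintegral_ofReal (hf_int.mono_set hs) (ae_of_all _ hf_nonneg)
  obtain ⟨S, hSΩ, hS, hS_eq, hle⟩ := exists_subset_measure_mul_setLIntegral_le hΩ hΩ_fin
    hf.ennreal_ofReal (ENNReal.ofReal_le_of_le_toReal hAΩ)
  refine ⟨S, hSΩ, hS, hS_eq, ?_⟩
  rwa [← hofReal S hSΩ, ← hofReal Ω subset_rfl, ← ofReal_measureReal hΩ_fin,
    ← ENNReal.ofReal_mul measureReal_nonneg, ← ENNReal.ofReal_mul hA,
    ENNReal.ofReal_le_ofReal_iff (mul_nonneg hA (integral_nonneg hf_nonneg))] at hle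

end Bathtub

section Plate

variable {n : ℕ} {Ω : Set (EuclideanSpace ℝ (Fin n))} {A : ℝ}

namespace TestFun

variable {u : EuclideanSpace ℝ (Fin n) → ℝ}

theorem continuous_sq (hu : TestFun Ω u) : Continuous fun x => u x ^ 2 :=
  hu.1.continuous.pow 2

theorem integrable_sq (hu : TestFun Ω u) : Integrable fun x => u x ^ 2 :=
  hu.continuous_sq.integrable_of_hasCompactSupport
    (hu.2.1.comp_left (g := fun y : ℝ => y ^ 2) (zero_pow two_ne_zero))

end TestFun

theorem exists_testFun (hΩ : (interior Ω).Nonempty) : ∃ u, TestFun Ω u := by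
  obtain ⟨x, hx⟩ := hΩ
  obtain ⟨u, hu_sub, hu_comp, hu_smooth, -, hux⟩ :=
    exists_contDiff_tsupport_subset (n := ⊤) (mem_interior_iff_mem_nhds.1 hx)
  exact ⟨u, hu_smooth, hu_comp, hu_sub, fun h => one_ne_zero (hux.symm.trans (congrFun h x))⟩

/-- A competitor `(S, u)` in the variational problem that defines `Lam Ω α A`. -/
structure PlateCompetitor (Ω : Set (EuclideanSpace ℝ (Fin n))) (A : ℝ) where
  set : Set (EuclideanSpace ℝ (Fin n))
  fn : EuclideanSpace ℝ (Fin n) → ℝ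
  measurableSet : MeasurableSet set
  subset : set ⊆ Ω
  volume_eq : volume set = ENNReal.ofReal A
  testFun : TestFun Ω fn

namespace PlateCompetitor

/-- The normalised bending energy `∫_Ω (Δu)² / ∫_Ω u²`: the intercept of the Rayleigh quotient as an
affine function of `α`. -/
def energy (p : PlateCompetitor Ω A) : ℝ :=
  (∫ x in Ω, lap p.fn x ^ 2) / ∫ x in Ω, p.fn x ^ 2

/-- The proportion `∫_S u² / ∫_Ω u²` of the mass of `u²` carried by `S`: the slope of the Rayleigh
quotient as an affine function of `α`. -/
def massRatio (p : PlateCompetitor Ω A) : ℝ :=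
  (∫ x in p.set, p.fn x ^ 2) / ∫ x in Ω, p.fn x ^ 2

/-- The Rayleigh quotient `(∫_Ω (Δu)² + α ∫_S u²) / ∫_Ω u²`, split into intercept and slope. -/
def rayleigh (p : PlateCompetitor Ω A) (α : ℝ) : ℝ :=
  p.energy + α * p.massRatio

theorem energy_nonneg (p : PlateCompetitor Ω A) : 0 ≤ p.energy :=
  div_nonneg (integral_nonneg fun _ => sq_nonneg _) (integral_nonneg fun _ => sq_nonneg _)

theorem massRatio_nonneg (p : PlateCompetitor Ω A) : 0 ≤ p.massRatio :=
  div_nonneg (integral_nonneg fun _ => sq_nonneg _) (integral_nonneg fun _ => sq_nonneg _)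

theorem massRatio_le_one (p : PlateCompetitor Ω A) : p.massRatio ≤ 1 :=
  div_le_one_of_le₀
    (setIntegral_mono_set p.testFun.integrable_sq.integrableOn (ae_of_all _ fun _ => sq_nonneg _)
      p.subset.eventuallyLE)
    (integral_nonneg fun _ => sq_nonneg _)

theorem rayleigh_mono (p : PlateCompetitor Ω A) : Monotone p.rayleigh := fun _ _ hαβ =>
  add_le_add_right (mul_le_mul_of_nonneg_right hαβ p.massRatio_nonneg) _

theorem bddBelow_range_rayleigh (Ω : Set (EuclideanSpace ℝ (Fin n))) (A α : ℝ) :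
    BddBelow (Set.range fun p : PlateCompetitor Ω A => p.rayleigh α) := by
  refine ⟨-|α|, Set.forall_mem_range.2 fun p => ?_⟩
  have hslope : |α * p.massRatio| ≤ |α| := by
    rw [abs_mul, abs_of_nonneg p.massRatio_nonneg]
    exact mul_le_of_le_one_right (abs_nonneg α) p.massRatio_le_one
  calc -|α| ≤ α * p.massRatio := (abs_le.1 hslope).1
    _ ≤ p.rayleigh α := le_add_of_nonneg_left p.energy_nonneg

theorem nonempty [NeZero n] (hΩ : MeasurableSet Ω) (hΩ_int : (interior Ω).Nonempty)
    (hΩ_fin : volume Ω ≠ ∞) (hAΩ : A ≤ volume.real Ω) : Nonempty (PlateCompetitor Ω A) := by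
  obtain ⟨u, hu⟩ := exists_testFun hΩ_int
  obtain ⟨S, hSΩ, hS, hS_eq⟩ :=
    exists_subset_measure_eq hΩ hΩ_fin (ENNReal.ofReal_le_of_le_toReal hAΩ)
  exact ⟨⟨S, u, hS, hSΩ, hS_eq, hu⟩⟩

theorem exists_massRatio_le [NeZero n] (hΩ : MeasurableSet Ω) (hΩ_pos : volume Ω ≠ 0)
    (hΩ_fin : volume Ω ≠ ∞) (hA : 0 ≤ A) (hAΩ : A ≤ volume.real Ω) (p : PlateCompetitor Ω A) :
    ∃ q : PlateCompetitor Ω A, q.energy = p.energy ∧ q.massRatio ≤ p.massRatio ∧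
      q.massRatio ≤ A / volume.real Ω := by
  rcases le_total p.massRatio (A / volume.real Ω) with hp | hp
  · exact ⟨p, rfl, le_rfl, hp⟩
  obtain ⟨S, hSΩ, hS, hS_eq, hle⟩ := exists_subset_measureReal_mul_setIntegral_le hΩ hΩ_fin
    p.testFun.continuous_sq.measurable (fun _ => sq_nonneg _)
    p.testFun.integrable_sq.integrableOn hA hAΩ
  let q : PlateCompetitor Ω A := ⟨S, p.fn, hS, hSΩ, hS_eq, p.testFun⟩
  have hvol : 0 < volume.real Ω := ENNReal.toReal_pos hΩ_pos hΩ_fin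
  have hq : q.massRatio ≤ A / volume.real Ω := by
    refine div_le_of_le_mul₀ (integral_nonneg fun _ => sq_nonneg _) (by positivity) ?_
    rwa [div_mul_eq_mul_div, le_div_iff₀' hvol]
  exact ⟨q, rfl, hq.trans hp, hq⟩

end PlateCompetitor

theorem lam_eq_iInf_rayleigh (Ω : Set (EuclideanSpace ℝ (Fin n))) (α A : ℝ) :
    Lam Ω α A = ⨅ p : PlateCompetitor Ω A, p.rayleigh α := by
  have hquot (p : PlateCompetitor Ω A) : p.rayleigh α =
      ((∫ x in Ω, lap p.fn x ^ 2) + α * ∫ x in p.set, p.fn x ^ 2) / ∫ x in Ω, p.fn x ^ 2 := by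
    rw [PlateCompetitor.rayleigh, PlateCompetitor.energy, PlateCompetitor.massRatio, add_div,
      mul_div_assoc]
  refine congrArg sInf (Set.ext fun r => ⟨?_, ?_⟩)
  · rintro ⟨S, hS, hSΩ, hS_eq, u, hu, rfl⟩
    exact ⟨⟨S, u, hS, hSΩ, hS_eq, hu⟩, hquot _⟩
  · rintro ⟨p, rfl⟩
    exact ⟨p.set, p.measurableSet, p.subset, p.volume_eq, p.fn, p.testFun, hquot p⟩

theorem lam_monotone (Ω : Set (EuclideanSpace ℝ (Fin n))) (A : ℝ) :
    Monotone fun α => Lam Ω α A := fun α β hαβ => by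
  simp only [lam_eq_iInf_rayleigh]
  exact ciInf_mono (PlateCompetitor.bddBelow_range_rayleigh Ω A α) fun p => p.rayleigh_mono hαβ

theorem lam_le_lam_add [NeZero n] (hΩ : MeasurableSet Ω) (hΩ_int : (interior Ω).Nonempty)
    (hΩ_fin : volume Ω ≠ ∞) (hA : 0 ≤ A) (hAΩ : A ≤ volume.real Ω) {α β : ℝ} (hα : 0 ≤ α)
    (hαβ : α ≤ β) : Lam Ω β A ≤ Lam Ω α A + A / volume.real Ω * (β - α) := by
  have := PlateCompetitor.nonempty hΩ hΩ_int hΩ_fin hAΩ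
  have hΩ_pos : volume Ω ≠ 0 := (Measure.measure_pos_of_nonempty_interior _ hΩ_int).ne'
  rw [← sub_le_iff_le_add, lam_eq_iInf_rayleigh Ω α]
  refine le_ciInf fun p => sub_le_iff_le_add.2 ?_
  obtain ⟨q, hq_energy, hqp, hq⟩ := p.exists_massRatio_le hΩ hΩ_pos hΩ_fin hA hAΩ
  calc Lam Ω β A ≤ q.rayleigh β := by
        rw [lam_eq_iInf_rayleigh]
        exact ciInf_le (PlateCompetitor.bddBelow_range_rayleigh Ω A β) q
    _ = p.energy + α * q.massRatio + q.massRatio * (β - α) := by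
        rw [PlateCompetitor.rayleigh, hq_energy]
        ring
    _ ≤ p.energy + α * p.massRatio + A / volume.real Ω * (β - α) := by
        have := sub_nonneg.2 hαβ
        gcongr

theorem statement4_general [NeZero n] (hΩ : MeasurableSet Ω) (hΩ_int : (interior Ω).Nonempty)
    (hΩ_fin : volume Ω ≠ ∞) (hA : 0 ≤ A) (hAΩ : A ≤ volume.real Ω) :
    (Monotone fun α => Lam Ω α A) ∧ ∀ α₁ α₂ : ℝ, 0 ≤ α₁ → 0 ≤ α₂ →
      |Lam Ω α₁ A - Lam Ω α₂ A| ≤ A / volume.real Ω * |α₁ - α₂| := by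
  refine ⟨lam_monotone Ω A, fun α₁ α₂ hα₁ hα₂ => ?_⟩
  wlog hle : α₁ ≤ α₂ generalizing α₁ α₂
  · simpa only [abs_sub_comm] using this α₂ α₁ hα₂ hα₁ (le_of_not_ge hle)
  rw [abs_sub_comm, abs_sub_comm α₁, abs_of_nonneg (sub_nonneg.2 (lam_monotone Ω A hle)),
    abs_of_nonneg (sub_nonneg.2 hle), sub_le_iff_le_add']
  exact lam_le_lam_add hΩ hΩ_int hΩ_fin hA hAΩ hα₁ hle

end Plate

/-- For every `A ∈ [0,|Ω|]`, the map `α ↦ Λ(α,A)` is non-decreasing on `(0,∞)` and Lipschitz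
continuous with Lipschitz constant `A/|Ω|`. -/
theorem statement4 {n : ℕ} (hn : 2 ≤ n) (Ω : Set (EuclideanSpace ℝ (Fin n)))
    (hne : Ω.Nonempty) (hΩo : IsOpen Ω) (hΩb : Bornology.IsBounded Ω)
    (A : ℝ) (hA0 : 0 ≤ A) (hA1 : A ≤ (volume Ω).toReal) :
    MonotoneOn (fun α => Lam Ω α A) (Set.Ioi (0 : ℝ)) ∧
    ∀ α₁ α₂ : ℝ, 0 < α₁ → 0 < α₂ →
      |Lam Ω α₁ A - Lam Ω α₂ A| ≤ A / (volume Ω).toReal * |α₁ - α₂| := by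
  have : NeZero n := ⟨by lia⟩
  obtain ⟨hmono, hlip⟩ := statement4_general hΩo.measurableSet (by rwa [hΩo.interior_eq])
    hΩb.measure_lt_top.ne hA0 hA1
  exact ⟨hmono.monotoneOn _, fun α₁ α₂ hα₁ hα₂ => hlip α₁ α₂ hα₁.le hα₂.le⟩
end
end

section
/- For every A ∈ [0, |Ω|) there exists a unique real number ᾱ(A) > 0 such that Λ(ᾱ(A), A) = ᾱ(A). -/
open MeasureTheory ENNReal

noncomputable section

/-!
For fixed `(S, u)` the quotient is an affine function of `α`, so `α ↦ Λ(α, A)` is concave on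
`[0, ∞)`, and so is `g(α) = Λ(α, A) - α`. A concave function that is positive at `0` and
nonpositive somewhere on `[0, ∞)` has exactly one positive zero.

Nonpositivity: since `A < |Ω|`, some admissible `S` avoids a small ball inside `Ω`. For `u`
supported in that ball the quotient does not depend on `α`; call it `M`. Then `Λ(M, A) ≤ M`.

Positivity of `g(0)` is a spectral gap `c ∫ u² ≤ ∫ (Δu)²`, which needs only `|Ω| < ∞`. By
Cauchy–Schwarz `|û|² ≤ |Ω| ∫ u²`, so a ball of volume at most `1 / (2|Ω|)` in frequency space
carries at most half of the mass of `û`; outside a ball of radius `R`, the symbol `(2π|ξ|)²` of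
`-Δ` is at least `(2πR)²`.
-/

/-! ### Concave functions on a half-line -/

section Concave

open Set

theorem concaveOn_iInf {E ι : Type*} [AddCommMonoid E] [Module ℝ E] [Nonempty ι] {s : Set E}
    {f : ι → E → ℝ} (hs : Convex ℝ s) (hf : ∀ i, ConcaveOn ℝ s (f i))
    (hbdd : ∀ x ∈ s, BddBelow (range fun i ↦ f i x)) :
    ConcaveOn ℝ s fun x ↦ ⨅ i, f i x := by
  refine ⟨hs, fun x hx y hy a b ha hb hab ↦ le_ciInf fun i ↦ ?_⟩
  calc a • (⨅ i, f i x) + b • (⨅ i, f i y) ≤ a • f i x + b • f i y := by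
        gcongr
        · exact ciInf_le (hbdd x hx) i
        · exact ciInf_le (hbdd y hy) i
    _ ≤ f i (a • x + b • y) := (hf i).2 hx hy ha hb hab

variable {g : ℝ → ℝ} {t b : ℝ}

theorem chord_le_of_concaveOn_Ici (hg : ConcaveOn ℝ (Ici 0) g) (hb : 0 ≤ b) (ht₀ : 0 ≤ t)
    (ht₁ : t ≤ 1) : (1 - t) * g 0 + t * g b ≤ g (t * b) := by
  simpa only [smul_eq_mul, mul_zero, zero_add] using
    hg.2 self_mem_Ici hb (sub_nonneg.2 ht₁) ht₀ (sub_add_cancel 1 t)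

theorem pos_of_concaveOn_Ici {a : ℝ} (hg : ConcaveOn ℝ (Ici 0) g) (h₀ : 0 < g 0) (ha : 0 ≤ a)
    (hab : a < b) (hgb : 0 ≤ g b) : 0 < g a := by
  have hb : 0 < b := ha.trans_lt hab
  have hlt : a / b < 1 := (div_lt_one hb).2 hab
  calc 0 < (1 - a / b) * g 0 := mul_pos (sub_pos.2 hlt) h₀
    _ ≤ (1 - a / b) * g 0 + a / b * g b := le_add_of_nonneg_right (by positivity)
    _ ≤ g (a / b * b) := chord_le_of_concaveOn_Ici hg hb.le (by positivity) hlt.le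
    _ = g a := by rw [div_mul_cancel₀ _ hb.ne']

theorem exists_pos_zero_of_concaveOn_Ici (hg : ConcaveOn ℝ (Ici 0) g) (h₀ : 0 < g 0) (hb : 0 ≤ b)
    (hgb : g b ≤ 0) : ∃ a, 0 < a ∧ g a = 0 := by
  have hb' : 0 < b := hb.lt_of_ne fun h ↦ hgb.not_gt (h ▸ h₀)
  have hdrop : 0 < g 0 - g b := by linarith
  -- At `t` the chord from `(0, g 0)` to `(b, g b)` has height `g 0 / 2`.
  set t := g 0 / (2 * (g 0 - g b)) with ht
  have ht₀ : 0 < t := by positivity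
  have ht₁ : t ≤ 1 := (div_le_one (by positivity)).2 (by linarith)
  have hgt : 0 ≤ g (t * b) := by
    have hchord : (1 - t) * g 0 + t * g b = g 0 / 2 := by rw [ht]; field
    linarith [chord_le_of_concaveOn_Ici hg hb ht₀.le ht₁]
  have hcont : ContinuousOn g (Icc (t * b) b) := by
    refine hg.continuousOn_interior.mono fun x hx ↦ ?_
    rw [interior_Ici]
    exact (mul_pos ht₀ hb').trans_le hx.1
  obtain ⟨a, ha, hga⟩ := intermediate_value_Icc' (mul_le_of_le_one_left hb ht₁) hcont ⟨hgb, hgt⟩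
  exact ⟨a, (mul_pos ht₀ hb').trans_le ha.1, hga⟩

theorem existsUnique_pos_zero_of_concaveOn_Ici (hg : ConcaveOn ℝ (Ici 0) g) (h₀ : 0 < g 0)
    (hb : 0 ≤ b) (hgb : g b ≤ 0) : ∃! a, 0 < a ∧ g a = 0 := by
  obtain ⟨a, ha⟩ := exists_pos_zero_of_concaveOn_Ici hg h₀ hb hgb
  refine ⟨a, ha, fun a' ha' ↦ ?_⟩
  rcases lt_trichotomy a' a with h | h | h
  · exact absurd ha'.2 (pos_of_concaveOn_Ici hg h₀ ha'.1.le h ha.2.ge).ne'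
  · exact h
  · exact absurd ha.2 (pos_of_concaveOn_Ici hg h₀ ha.1.le h ha'.2.ge).ne'

end Concave

/-! ### Sets of prescribed measure -/

section Measure

open Set Filter Topology

theorem exists_ball_measure_lt {X : Type*} [PseudoMetricSpace X] [MeasurableSpace X]
    {μ : Measure X} [μ.OuterRegular] [NullSingletonClass μ] (x : X) {ε : ℝ≥0∞} (hε : 0 < ε) :
    ∃ r > 0, μ (Metric.ball x r) < ε := by
  obtain ⟨U, hxU, hU, hμU⟩ := ({x} : Set X).exists_isOpen_lt_of_lt ε
    ((measure_singleton x (μ := μ)).trans_lt hε)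
  obtain ⟨r, hr, hrU⟩ := Metric.isOpen_iff.1 hU x (hxU rfl)
  exact ⟨r, hr, (measure_mono hrU).trans_lt hμU⟩

variable {X : Type*} [MeasurableSpace X] {μ : Measure X} {f : X → ℝ} {s : Set X}

theorem continuous_measure_inter_sublevel (hf : Measurable f) (hf₀ : ∀ t, μ (f ⁻¹' {t}) = 0)
    (hs : MeasurableSet s) (hμs : μ s ≠ ∞) : Continuous fun t ↦ μ (s ∩ {x | f x ≤ t}) := by
  refine continuous_iff_continuousAt.2 fun t ↦
    tendsto_measure_of_ae_tendsto_indicator _ (hs.inter (measurableSet_le hf measurable_const))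
      (fun t ↦ hs.inter (measurableSet_le hf measurable_const)) hs hμs
      (.of_forall fun t ↦ inter_subset_left) ?_
  filter_upwards [measure_eq_zero_iff_ae_notMem.1 (hf₀ t)] with x hx
  rcases lt_or_gt_of_ne hx with hlt | hgt
  · filter_upwards [eventually_gt_nhds hlt] with t' ht'
    simp only [mem_inter_iff, mem_ofPred_eq, ht'.le, hlt.le]
  · filter_upwards [eventually_lt_nhds hgt] with t' ht'
    simp only [mem_inter_iff, mem_ofPred_eq, ht'.not_ge, hgt.not_ge]

theorem exists_measurableSet_subset_measure_eq (hf : Measurable f) (hf₀ : ∀ t, μ (f ⁻¹' {t}) = 0)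
    (hs : MeasurableSet s) (hμs : μ s ≠ ∞) {a : ℝ≥0∞} (ha : a ≤ μ s) :
    ∃ t, MeasurableSet t ∧ t ⊆ s ∧ μ t = a := by
  rcases eq_or_ne a 0 with rfl | ha₀
  · exact ⟨∅, .empty, empty_subset s, measure_empty⟩
  rcases ha.eq_or_lt with rfl | has
  · exact ⟨s, hs, subset_rfl, rfl⟩
  have hmeas (t : ℝ) : MeasurableSet (s ∩ {x | f x ≤ t}) :=
    hs.inter (measurableSet_le hf measurable_const)
  have hbot : Tendsto (fun t ↦ μ (s ∩ {x | f x ≤ t})) atBot (𝓝 (μ ∅)) :=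
    tendsto_measure_of_tendsto_indicator _ hmeas hs hμs (.of_forall fun t ↦ inter_subset_left)
      fun x ↦ (eventually_lt_atBot (f x)).mono fun t ht ↦ by
        simp only [mem_inter_iff, mem_ofPred_eq, ht.not_ge, and_false, mem_empty_iff_false]
  have htop : Tendsto (fun t ↦ μ (s ∩ {x | f x ≤ t})) atTop (𝓝 (μ s)) :=
    tendsto_measure_of_tendsto_indicator _ hmeas hs hμs (.of_forall fun t ↦ inter_subset_left)
      fun x ↦ (eventually_ge_atTop (f x)).mono fun t ht ↦ by
        simp only [mem_inter_iff, mem_ofPred_eq, ht, and_true]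
  have hivt := isPreconnected_univ.intermediate_value_Ioo (by simp only [principal_univ, le_top])
    (by simp only [principal_univ, le_top])
    (continuous_measure_inter_sublevel hf hf₀ hs hμs).continuousOn hbot htop
  obtain ⟨t, -, ht⟩ := hivt ⟨by rwa [measure_empty, pos_iff_ne_zero], has⟩
  exact ⟨_, hmeas t, inter_subset_left, ht⟩

theorem exists_measurableSet_subset_addHaar_eq {E : Type*} [NormedAddCommGroup E]
    [NormedSpace ℝ E] [FiniteDimensional ℝ E] [Nontrivial E] [MeasurableSpace E] [BorelSpace E]
    {μ : Measure E} [μ.IsAddHaarMeasure] {s : Set E} (hs : MeasurableSet s) (hμs : μ s ≠ ∞)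
    {a : ℝ≥0∞} (ha : a ≤ μ s) : ∃ t, MeasurableSet t ∧ t ⊆ s ∧ μ t = a := by
  refine exists_measurableSet_subset_measure_eq measurable_norm (fun t ↦ ?_) hs hμs ha
  have hsphere : norm ⁻¹' {t} = Metric.sphere (0 : E) t := by
    ext x
    rw [mem_sphere_zero_iff_norm, mem_preimage, mem_singleton_iff]
  rw [hsphere, Measure.addHaar_sphere]

theorem sq_setIntegral_le_measureReal_mul {g : X → ℝ} (hμs : μ s ≠ ∞) (hg : IntegrableOn g s μ)
    (hg2 : IntegrableOn (fun x ↦ g x ^ 2) s μ) :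
    (∫ x in s, g x ∂μ) ^ 2 ≤ μ.real s * ∫ x in s, g x ^ 2 ∂μ := by
  have hquad (t : ℝ) : 0 ≤ μ.real s * (t * t) + -2 * (∫ x in s, g x ∂μ) * t
      + ∫ x in s, g x ^ 2 ∂μ := by
    have hconst : IntegrableOn (fun _ ↦ t ^ 2) s μ := integrableOn_const hμs
    calc 0 ≤ ∫ x in s, (g x - t) ^ 2 ∂μ := integral_nonneg fun x ↦ sq_nonneg _
      _ = ∫ x in s, (g x ^ 2 - 2 * t * g x + t ^ 2) ∂μ := by congr! 2; ring
      _ = _ := by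
        have hlin : IntegrableOn (fun x ↦ 2 * t * g x) s μ := hg.const_mul _
        rw [integral_add (by exact hg2.sub hlin) hconst, integral_sub hg2 hlin,
          integral_const_mul, setIntegral_const, smul_eq_mul]
        ring
  have hdiscrim := discrim_le_zero hquad
  rw [discrim] at hdiscrim
  linarith

end Measure

/-! ### The spectral gap of the bilaplacian on sets of finite volume -/

section SpectralGap

open Set
open scoped FourierTransform Laplacian SchwartzMap

variable {E H : Type*} [NormedAddCommGroup E] [InnerProductSpace ℝ E] [FiniteDimensional ℝ E]
  [MeasurableSpace E] [BorelSpace E] [NormedAddCommGroup H] [InnerProductSpace ℂ H] {s : Set E}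

theorem integrable_norm_sq_schwartz (f : 𝓢(E, H)) : Integrable fun x ↦ ‖f x‖ ^ 2 :=
  (f.memLp 2).integrable_norm_pow two_ne_zero

theorem norm_sq_fourier_le (hs : volume s ≠ ∞) {f : 𝓢(E, H)} (hf : Function.support f ⊆ s)
    (ξ : E) : ‖𝓕 f ξ‖ ^ 2 ≤ volume.real s * ∫ x, ‖f x‖ ^ 2 := by
  have hf₀ (x : E) (hx : x ∉ s) : f x = 0 := Function.notMem_support.1 fun h ↦ hx (hf h)
  calc ‖𝓕 f ξ‖ ^ 2 ≤ (∫ x, ‖f x‖) ^ 2 := by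
        gcongr
        exact VectorFourier.norm_fourierIntegral_le_integral_norm _ _ _ f ξ
    _ = (∫ x in s, ‖f x‖) ^ 2 := by
        rw [setIntegral_eq_integral_of_forall_compl_eq_zero fun x hx ↦ by rw [hf₀ x hx, norm_zero]]
    _ ≤ volume.real s * ∫ x in s, ‖f x‖ ^ 2 :=
        sq_setIntegral_le_measureReal_mul hs f.integrable.norm.integrableOn
          (integrable_norm_sq_schwartz f).integrableOn
    _ = volume.real s * ∫ x, ‖f x‖ ^ 2 := by
        rw [setIntegral_eq_integral_of_forall_compl_eq_zero fun x hx ↦ by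
          rw [hf₀ x hx, norm_zero, zero_pow two_ne_zero]]

theorem setIntegral_ball_norm_sq_fourier_le (hs : volume s ≠ ∞) {f : 𝓢(E, H)}
    (hf : Function.support f ⊆ s) (R : ℝ) :
    ∫ ξ in Metric.ball 0 R, ‖𝓕 f ξ‖ ^ 2 ≤
      volume.real (Metric.ball (0 : E) R) * volume.real s * ∫ x, ‖f x‖ ^ 2 := by
  calc ∫ ξ in Metric.ball 0 R, ‖𝓕 f ξ‖ ^ 2
      ≤ ∫ _ in Metric.ball (0 : E) R, volume.real s * ∫ x, ‖f x‖ ^ 2 :=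
        setIntegral_mono (integrable_norm_sq_schwartz _).integrableOn
          (integrableOn_const measure_ball_lt_top.ne) (norm_sq_fourier_le hs hf)
    _ = _ := by rw [setIntegral_const, smul_eq_mul, mul_assoc]

variable [CompleteSpace H]

theorem fourier_laplacian_apply (f : 𝓢(E, H)) (ξ : E) :
    𝓕 (Δ f) ξ = (-(2 * Real.pi * ‖ξ‖) ^ 2 : ℝ) • 𝓕 f ξ := by
  have hgrowth : (fun x : E ↦ ‖x‖ ^ 2).HasTemperateGrowth := by fun_prop
  rw [SchwartzMap.laplacian_eq_fourierMultiplierCLM, FourierTransform.fourier_smul,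
    SchwartzMap.fourierMultiplierCLM_apply, FourierTransform.fourier_fourierInv_eq,
    smul_apply, SchwartzMap.smulLeftCLM_apply_apply hgrowth, smul_smul]
  congr 1
  ring

theorem mul_setIntegral_compl_ball_norm_sq_fourier_le (f : 𝓢(E, H)) {R : ℝ} (hR : 0 ≤ R) :
    (2 * Real.pi * R) ^ 4 * ∫ ξ in (Metric.ball 0 R)ᶜ, ‖𝓕 f ξ‖ ^ 2 ≤ ∫ x, ‖Δ f x‖ ^ 2 := by
  calc (2 * Real.pi * R) ^ 4 * ∫ ξ in (Metric.ball 0 R)ᶜ, ‖𝓕 f ξ‖ ^ 2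
      = ∫ ξ in (Metric.ball 0 R)ᶜ, (2 * Real.pi * R) ^ 4 * ‖𝓕 f ξ‖ ^ 2 :=
        (integral_const_mul _ _).symm
    _ ≤ ∫ ξ in (Metric.ball 0 R)ᶜ, ‖𝓕 (Δ f) ξ‖ ^ 2 := by
        refine setIntegral_mono_on ((integrable_norm_sq_schwartz _).integrableOn.const_mul _)
          (integrable_norm_sq_schwartz _).integrableOn measurableSet_ball.compl fun ξ hξ ↦ ?_
        have hRξ : R ≤ ‖ξ‖ := by simpa only [mem_compl_iff, mem_ball_zero_iff, not_lt] using hξ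
        calc (2 * Real.pi * R) ^ 4 * ‖𝓕 f ξ‖ ^ 2
            ≤ (2 * Real.pi * ‖ξ‖) ^ 4 * ‖𝓕 f ξ‖ ^ 2 := by gcongr
          _ = ‖𝓕 (Δ f) ξ‖ ^ 2 := by
            rw [fourier_laplacian_apply, norm_smul, norm_neg, norm_pow, Real.norm_eq_abs, sq_abs]
            ring
    _ ≤ ∫ ξ, ‖𝓕 (Δ f) ξ‖ ^ 2 :=
        setIntegral_le_integral (integrable_norm_sq_schwartz _) (.of_forall fun ξ ↦ sq_nonneg _)
    _ = ∫ x, ‖Δ f x‖ ^ 2 := SchwartzMap.integral_norm_sq_fourier _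

theorem exists_pos_mul_integral_norm_sq_le_integral_norm_laplacian_sq [Nontrivial E]
    (hs : volume s ≠ ∞) : ∃ c > 0, ∀ f : 𝓢(E, H), Function.support f ⊆ s →
      c * ∫ x, ‖f x‖ ^ 2 ≤ ∫ x, ‖Δ f x‖ ^ 2 := by
  obtain ⟨R, hR, hball⟩ := exists_ball_measure_lt (μ := volume) (0 : E)
    (ε := ENNReal.ofReal (1 / (2 * (volume.real s + 1)))) (by positivity)
  have hhalf : volume.real (Metric.ball (0 : E) R) * volume.real s ≤ 1 / 2 := by
    have hball' := ENNReal.toReal_lt_of_lt_ofReal hball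
    calc volume.real (Metric.ball (0 : E) R) * volume.real s
        ≤ 1 / (2 * (volume.real s + 1)) * (volume.real s + 1) := by
          gcongr
          · exact hball'.le
          · exact le_add_of_nonneg_right zero_le_one
      _ = 1 / 2 := by field_simp
  refine ⟨(2 * Real.pi * R) ^ 4 / 2, by positivity, fun f hf ↦ ?_⟩
  have hlow := (setIntegral_ball_norm_sq_fourier_le hs hf R).trans
    (mul_le_mul_of_nonneg_right hhalf (integral_nonneg fun x ↦ sq_nonneg _))
  have hsplit := integral_add_compl (measurableSet_ball (x := (0 : E)) (ε := R))
    (integrable_norm_sq_schwartz (𝓕 f))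
  rw [SchwartzMap.integral_norm_sq_fourier] at hsplit
  calc (2 * Real.pi * R) ^ 4 / 2 * ∫ x, ‖f x‖ ^ 2
      = (2 * Real.pi * R) ^ 4 * ((∫ x, ‖f x‖ ^ 2) / 2) := by ring
    _ ≤ (2 * Real.pi * R) ^ 4 * ∫ ξ in (Metric.ball 0 R)ᶜ, ‖𝓕 f ξ‖ ^ 2 := by
        gcongr
        linarith
    _ ≤ ∫ x, ‖Δ f x‖ ^ 2 := mul_setIntegral_compl_ball_norm_sq_fourier_le f hR.le

theorem exists_pos_mul_integral_sq_le_integral_laplacian_sq [Nontrivial E] (hs : volume s ≠ ∞) :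
    ∃ c > 0, ∀ u : E → ℝ, ContDiff ℝ (⊤ : ℕ∞) u → HasCompactSupport u → Function.support u ⊆ s →
      c * ∫ x, u x ^ 2 ≤ ∫ x, Δ u x ^ 2 := by
  obtain ⟨c, hc, hgap⟩ :=
    exists_pos_mul_integral_norm_sq_le_integral_norm_laplacian_sq (H := ℂ) hs
  refine ⟨c, hc, fun u hu hcs hus ↦ ?_⟩
  let f : 𝓢(E, ℂ) := (hcs.comp_left Complex.ofReal_zero).toSchwartzMap
    (Complex.ofRealCLM.contDiff.comp hu)
  have hf (x : E) : ‖f x‖ ^ 2 = u x ^ 2 := by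
    calc ‖f x‖ ^ 2 = ‖(u x : ℂ)‖ ^ 2 := rfl
      _ = u x ^ 2 := by rw [Complex.norm_real, Real.norm_eq_abs, sq_abs]
  have hΔf (x : E) : ‖Δ f x‖ ^ 2 = Δ u x ^ 2 := by
    have hcomp : Δ f x = (Δ u x : ℂ) := (SchwartzMap.laplacian_apply f x).trans
      ((hu.of_le (WithTop.coe_le_coe.2 le_top)).contDiffAt.laplacian_CLM_comp_left
        (l := Complex.ofRealCLM))
    rw [hcomp, Complex.norm_real, Real.norm_eq_abs, sq_abs]
  have hfs : Function.support f ⊆ s := fun x hx ↦ hus fun hux ↦ hx <| by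
    rw [← norm_eq_zero, ← sq_eq_zero_iff, hf, hux, zero_pow two_ne_zero]
  simpa only [hf, hΔf] using hgap f hfs

end SpectralGap

/-! ### The plate functional -/

section Plate

open Set
open scoped Laplacian

variable {n : ℕ} {Ω S : Set (EuclideanSpace ℝ (Fin n))} {u : EuclideanSpace ℝ (Fin n) → ℝ}
  {α A : ℝ}

theorem lap_eq_laplacian (u : EuclideanSpace ℝ (Fin n) → ℝ) : lap u = Δ u := by
  rw [InnerProductSpace.laplacian_eq_iteratedFDeriv_orthonormalBasis u
    (EuclideanSpace.basisFun (Fin n) ℝ)]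
  simp only [EuclideanSpace.basisFun_apply]
  rfl

theorem TestFun.eq_zero_of_notMem (hu : TestFun Ω u) {x : EuclideanSpace ℝ (Fin n)}
    (hx : x ∉ Ω) : u x = 0 :=
  image_eq_zero_of_notMem_tsupport fun h ↦ hx (hu.2.2.1 h)

theorem TestFun.lap_eq_zero_of_notMem (hu : TestFun Ω u) {x : EuclideanSpace ℝ (Fin n)}
    (hx : x ∉ Ω) : lap u x = 0 := by
  have hD : iteratedFDeriv ℝ 2 u x = 0 := Function.notMem_support.1 fun h ↦
    hx (hu.2.2.1 (support_iteratedFDeriv_subset 2 h))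
  simp only [lap, hD, zero_apply, Finset.sum_const_zero]

theorem TestFun.setIntegral_sq (hu : TestFun Ω u) : ∫ x in Ω, u x ^ 2 = ∫ x, u x ^ 2 :=
  setIntegral_eq_integral_of_forall_compl_eq_zero fun x hx ↦ by
    rw [hu.eq_zero_of_notMem hx, zero_pow two_ne_zero]

theorem TestFun.setIntegral_lap_sq (hu : TestFun Ω u) :
    ∫ x in Ω, lap u x ^ 2 = ∫ x, lap u x ^ 2 :=
  setIntegral_eq_integral_of_forall_compl_eq_zero fun x hx ↦ by
    rw [hu.lap_eq_zero_of_notMem hx, zero_pow two_ne_zero]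

theorem TestFun.setIntegral_sq_pos (hu : TestFun Ω u) : 0 < ∫ x in Ω, u x ^ 2 := by
  obtain ⟨x, hx⟩ := Function.ne_iff.1 hu.2.2.2
  rw [hu.setIntegral_sq]
  exact (hu.1.continuous.pow 2).integral_pos_of_hasCompactSupport_nonneg_nonzero
    (HasCompactSupport.intro hu.2.1 fun y hy ↦ by
      rw [image_eq_zero_of_notMem_tsupport hy, zero_pow two_ne_zero])
    (fun y ↦ sq_nonneg (u y)) (x := x) (pow_ne_zero 2 hx)

/-- The Rayleigh quotient of the plate `Ω` reinforced with weight `α` on `S`. -/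
def plateQuotient (Ω S : Set (EuclideanSpace ℝ (Fin n))) (u : EuclideanSpace ℝ (Fin n) → ℝ)
    (α : ℝ) : ℝ :=
  ((∫ x in Ω, lap u x ^ 2) + α * ∫ x in S, u x ^ 2) / ∫ x in Ω, u x ^ 2

/-- The pairs `(S, u)` over which the infimum defining `Lam Ω α A` is taken. -/
def admissiblePairs (Ω : Set (EuclideanSpace ℝ (Fin n))) (A : ℝ) :
    Set (Set (EuclideanSpace ℝ (Fin n)) × (EuclideanSpace ℝ (Fin n) → ℝ)) :=
  {p | MeasurableSet p.1 ∧ p.1 ⊆ Ω ∧ volume p.1 = ENNReal.ofReal A ∧ TestFun Ω p.2}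

theorem Lam_eq_iInf (Ω : Set (EuclideanSpace ℝ (Fin n))) (α A : ℝ) :
    Lam Ω α A = ⨅ p : admissiblePairs Ω A, plateQuotient Ω p.1.1 p.1.2 α := by
  rw [Lam, iInf]
  congr 1
  ext r
  constructor
  · rintro ⟨S, hS, hSΩ, hSA, u, hu, rfl⟩
    exact ⟨⟨(S, u), hS, hSΩ, hSA, hu⟩, rfl⟩
  · rintro ⟨⟨⟨S, u⟩, hS, hSΩ, hSA, hu⟩, rfl⟩
    exact ⟨S, hS, hSΩ, hSA, u, hu, rfl⟩

theorem plateQuotient_nonneg (hα : 0 ≤ α) : 0 ≤ plateQuotient Ω S u α :=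
  div_nonneg (add_nonneg (integral_nonneg fun _ ↦ sq_nonneg _)
    (mul_nonneg hα (integral_nonneg fun _ ↦ sq_nonneg _))) (integral_nonneg fun _ ↦ sq_nonneg _)

theorem bddBelow_range_plateQuotient (hα : 0 ≤ α) :
    BddBelow (range fun p : admissiblePairs Ω A ↦ plateQuotient Ω p.1.1 p.1.2 α) :=
  ⟨0, forall_mem_range.2 fun _ ↦ plateQuotient_nonneg hα⟩

theorem Lam_le_plateQuotient (hα : 0 ≤ α) (hp : (S, u) ∈ admissiblePairs Ω A) :
    Lam Ω α A ≤ plateQuotient Ω S u α :=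
  Lam_eq_iInf Ω α A ▸ ciInf_le (bddBelow_range_plateQuotient hα) ⟨(S, u), hp⟩

theorem concaveOn_plateQuotient {s : Set ℝ} (hs : Convex ℝ s) :
    ConcaveOn ℝ s (plateQuotient Ω S u) := by
  refine ⟨hs, fun x _ y _ a b _ _ hab ↦ le_of_eq ?_⟩
  simp only [plateQuotient, smul_eq_mul]
  linear_combination ((∫ x in Ω, lap u x ^ 2) / ∫ x in Ω, u x ^ 2) * hab

theorem concaveOn_Lam (hne : (admissiblePairs Ω A).Nonempty) :
    ConcaveOn ℝ (Ici 0) fun α ↦ Lam Ω α A := by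
  have : Nonempty (admissiblePairs Ω A) := hne.to_subtype
  simp only [Lam_eq_iInf]
  exact concaveOn_iInf (convex_Ici 0) (fun _ ↦ concaveOn_plateQuotient (convex_Ici 0))
    fun _ hα ↦ bddBelow_range_plateQuotient hα

theorem Lam_zero_pos [NeZero n] (hΩ : volume Ω ≠ ∞) (hne : (admissiblePairs Ω A).Nonempty) :
    0 < Lam Ω 0 A := by
  obtain ⟨c, hc, hgap⟩ := exists_pos_mul_integral_sq_le_integral_laplacian_sq hΩ
  have : Nonempty (admissiblePairs Ω A) := hne.to_subtype
  rw [Lam_eq_iInf]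
  refine hc.trans_le (le_ciInf fun ⟨⟨S, u⟩, _, _, _, hu⟩ ↦ ?_)
  rw [plateQuotient, zero_mul, add_zero, le_div_iff₀ hu.setIntegral_sq_pos, hu.setIntegral_sq,
    hu.setIntegral_lap_sq, lap_eq_laplacian]
  exact hgap u hu.1 hu.2.1 ((subset_tsupport u).trans hu.2.2.1)

theorem exists_mem_admissiblePairs_eqOn_zero [NeZero n] (hΩo : IsOpen Ω) (hΩ : volume Ω ≠ ∞)
    (hA : ENNReal.ofReal A < volume Ω) : ∃ S u, (S, u) ∈ admissiblePairs Ω A ∧ EqOn u 0 S := by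
  obtain ⟨x, hx⟩ : Ω.Nonempty := nonempty_of_measure_ne_zero (pos_of_gt hA).ne'
  obtain ⟨r, hr, hball⟩ := exists_ball_measure_lt (μ := volume) x (tsub_pos_iff_lt.2 hA)
  obtain ⟨u, hur, hcs, hu, -, hux⟩ := exists_contDiff_tsupport_subset (n := (⊤ : ℕ∞))
    (Filter.inter_mem (hΩo.mem_nhds hx) (Metric.ball_mem_nhds x hr))
  have hdiff : ENNReal.ofReal A ≤ volume (Ω \ Metric.ball x r) :=
    calc ENNReal.ofReal A ≤ volume Ω - volume (Metric.ball x r) := (lt_tsub_comm.1 hball).le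
      _ ≤ volume (Ω \ Metric.ball x r) := le_measure_sdiff
  obtain ⟨S, hS, hSsub, hSA⟩ := exists_measurableSet_subset_addHaar_eq
    (hΩo.measurableSet.diff measurableSet_ball) (measure_ne_top_of_subset sdiff_subset hΩ) hdiff
  refine ⟨S, u, ⟨hS, hSsub.trans sdiff_subset, hSA, hu, hcs, hur.trans inter_subset_left, ?_⟩, ?_⟩
  · exact fun h ↦ one_ne_zero (hux.symm.trans (congrFun h x))
  · exact fun y hy ↦ image_eq_zero_of_notMem_tsupport fun h ↦ (hSsub hy).2 (hur h).2

theorem plateQuotient_eq_of_eqOn_zero (hu : EqOn u 0 S) (α β : ℝ) :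
    plateQuotient Ω S u α = plateQuotient Ω S u β := by
  have hint : ∫ x in S, u x ^ 2 = 0 := setIntegral_eq_zero_of_forall_eq_zero fun x hx ↦ by
    rw [hu hx, Pi.zero_apply, zero_pow two_ne_zero]
  simp only [plateQuotient, hint, mul_zero]

theorem statement6_general [NeZero n] (Ω : Set (EuclideanSpace ℝ (Fin n))) (hΩo : IsOpen Ω)
    (hΩ : volume Ω ≠ ∞) (A : NNReal) (hA : A < volume Ω) :
    ∃! a : ℝ, 0 < a ∧ Lam Ω a A = a := by
  obtain ⟨S, u, hSu, hu⟩ := exists_mem_admissiblePairs_eqOn_zero (A := A) hΩo hΩ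
    (by rwa [ENNReal.ofReal_coe_nnreal])
  have hne : (admissiblePairs Ω A).Nonempty := ⟨_, hSu⟩
  have hconc : ConcaveOn ℝ (Ici 0) fun α ↦ Lam Ω α A - α :=
    (concaveOn_Lam hne).sub (convexOn_id (convex_Ici 0))
  have hpos : 0 < Lam Ω 0 A - 0 := by
    rw [sub_zero]
    exact Lam_zero_pos hΩ hne
  set M := plateQuotient Ω S u 0
  have hM0 : 0 ≤ M := plateQuotient_nonneg le_rfl
  have hLamM : Lam Ω M A - M ≤ 0 :=
    sub_nonpos.2 <| (Lam_le_plateQuotient hM0 hSu).trans_eq <|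
      plateQuotient_eq_of_eqOn_zero hu M 0
  simpa only [sub_eq_zero] using existsUnique_pos_zero_of_concaveOn_Ici hconc hpos hM0 hLamM

end Plate

/-- For every `A ∈ [0,|Ω|)` there is a unique `ᾱ(A) > 0` with `Λ(ᾱ(A),A) = ᾱ(A)`. -/
theorem statement6 {n : ℕ} (hn : 2 ≤ n) (Ω : Set (EuclideanSpace ℝ (Fin n)))
    (hne : Ω.Nonempty) (hΩo : IsOpen Ω) (hΩb : Bornology.IsBounded Ω)
    (A : ℝ) (hA0 : 0 ≤ A) (hA1 : A < (volume Ω).toReal) :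
    ∃! a : ℝ, 0 < a ∧ Lam Ω a A = a := by
  have : NeZero n := ⟨by omega⟩
  have hΩ : volume Ω ≠ ∞ := hΩb.measure_lt_top.ne
  lift A to NNReal using hA0
  exact statement6_general Ω hΩo hΩ A ((ENNReal.toReal_lt_toReal ENNReal.coe_ne_top hΩ).1 hA1)
end
end

section
/- Let B be the open unit ball of ℝⁿ, let 𝓗 ⊆ ℝⁿ be a closed half-space with 0 in the interior of 𝓗, let 0 ≤ h < H and t ≥ 0, and let u : ℝⁿ → ℝ be continuous with u > 0 on B and u = 0 on ℝⁿ ∖ B. Let ρ_{u_𝓗} be the density associated to the polarization u_𝓗. Let w : ℝⁿ → [0,∞) be measurable, square-integrable on B, vanishing outside B, and satisfying: (i) w(x) ≥ w(x̄) for every x ∈ 𝓗; (ii) w(x) ≥ u_𝓗(x) for every x ∈ 𝓗; (iii) w(x) + w(x̄) ≥ u_𝓗(x) + u_𝓗(x̄) for every x ∈ ℝⁿ. Then ∫_B ρ_{u_𝓗} u_𝓗 w ≤ ∫_B ρ_{u_𝓗} w². -/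
open MeasureTheory ENNReal RealInnerProductSpace

noncomputable section

/-- Reflection of `x` across the hyperplane `{y : ⟪y,e⟫ = c}` (the boundary of the closed
half-space `𝓗 = {y : ⟪y,e⟫ ≤ c}`, for a unit vector `e`). -/
def reflH {n : ℕ} (e : EuclideanSpace ℝ (Fin n)) (c : ℝ) (x : EuclideanSpace ℝ (Fin n)) :
    EuclideanSpace ℝ (Fin n) :=
  x - (2 * (⟪x, e⟫ - c)) • e

/-- Polarization of `v : ℝⁿ → ℝ` relative to the closed half-space `𝓗 = {y : ⟪y,e⟫ ≤ c}`:
`v_𝓗(x) = max{v(x), v(x̄)}` for `x ∈ 𝓗` and `v_𝓗(x) = min{v(x), v(x̄)}` for `x ∉ 𝓗`. -/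
def polarize {n : ℕ} (e : EuclideanSpace ℝ (Fin n)) (c : ℝ)
    (v : EuclideanSpace ℝ (Fin n) → ℝ) (x : EuclideanSpace ℝ (Fin n)) : ℝ :=
  if ⟪x, e⟫ ≤ c then max (v x) (v (reflH e c x)) else min (v x) (v (reflH e c x))

/-- The two-valued density associated to `v`: `ρ_v(x) = h` if `v(x) ≤ √t`, `ρ_v(x) = H`
if `v(x) > √t`. -/
def rhoD {n : ℕ} (h H t : ℝ) (v : EuclideanSpace ℝ (Fin n) → ℝ)
    (x : EuclideanSpace ℝ (Fin n)) : ℝ :=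
  if v x ≤ Real.sqrt t then h else H

/-!
The integrands at `x` and `x̄` are compared together. For `x ∈ 𝓗` write `r`, `a`, `s` for the values
of `ρ_{u_𝓗}`, `u_𝓗`, `w` at `x`, and `r'`, `b`, `s'` for their values at `x̄`. Then
`r s (s - a) + r' s' (s' - b) = (r s - r' s') (s - a) + r' s' ((s + s') - (a + b))`,
and every factor on the right is nonnegative: polarization moves the larger value of `u` into `𝓗`,
so `r' ≤ r`, while (i), (ii), (iii) give `s' ≤ s`, `a ≤ s`, `a + b ≤ s + s'`. As the reflection
preserves Lebesgue measure, integrating this inequality over `ℝⁿ` yields twice the claim.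
-/

lemma mul_mul_add_mul_mul_le_mul_sq_add_mul_sq {R : Type*} [CommRing R] [PartialOrder R]
    [IsOrderedRing R] {r r' a b s s' : R} (hr' : 0 ≤ r') (hr : r' ≤ r) (hs' : 0 ≤ s')
    (hs : s' ≤ s) (has : a ≤ s) (hab : a + b ≤ s + s') :
    r * a * s + r' * b * s' ≤ r * s ^ 2 + r' * s' ^ 2 := by
  have hrs : r' * s' ≤ r * s := mul_le_mul hr hs hs' (hr'.trans hr)
  rw [← sub_nonneg]
  calc
    0 ≤ (r * s - r' * s') * (s - a) + r' * s' * (s + s' - (a + b)) :=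
      add_nonneg (mul_nonneg (sub_nonneg.2 hrs) (sub_nonneg.2 has))
        (mul_nonneg (mul_nonneg hr' hs') (sub_nonneg.2 hab))
    _ = r * s ^ 2 + r' * s' ^ 2 - (r * a * s + r' * b * s') := by ring

section MeasurePreserving

variable {X : Type*} [MeasurableSpace X] {μ : Measure X} {σ : X → X}

lemma integral_add_comp_self {E : Type*} [NormedAddCommGroup E] [NormedSpace ℝ E]
    (hσ : MeasurePreserving σ μ μ) {f : X → E} (hf : Integrable f μ) :
    ∫ x, (f x + f (σ x)) ∂μ = (2 : ℝ) • ∫ x, f x ∂μ := by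
  have hcomp : ∫ x, f (σ x) ∂μ = ∫ x, f x ∂μ := by
    rw [← integral_map hσ.aemeasurable (hσ.map_eq.symm ▸ hf.aestronglyMeasurable), hσ.map_eq]
  have hf_comp : Integrable (fun x ↦ f (σ x)) μ := hσ.integrable_comp_of_integrable hf
  rw [integral_add hf hf_comp, hcomp, two_smul]

lemma integral_le_integral_of_add_comp_le (hσ : MeasurePreserving σ μ μ) {f g : X → ℝ}
    (hf : Integrable f μ) (hg : Integrable g μ)
    (hfg : ∀ᵐ x ∂μ, f x + f (σ x) ≤ g x + g (σ x)) :
    ∫ x, f x ∂μ ≤ ∫ x, g x ∂μ := by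
  have hsum : ∫ x, (f x + f (σ x)) ∂μ ≤ ∫ x, (g x + g (σ x)) ∂μ :=
    integral_mono_ae (hf.add (hσ.integrable_comp_of_integrable hf))
      (hg.add (hσ.integrable_comp_of_integrable hg)) hfg
  rw [integral_add_comp_self hσ hf, integral_add_comp_self hσ hg] at hsum
  exact le_of_smul_le_smul_left hsum two_pos

lemma setIntegral_mul_mul_le_setIntegral_mul_sq (hσ : MeasurePreserving σ μ μ)
    (hinv : Function.Involutive σ) {A S : Set X} (hA : ∀ x ∉ A, σ x ∈ A) {ρ p w : X → ℝ}
    (hρ0 : ∀ x, 0 ≤ ρ x) (hρ : ∀ x ∈ A, ρ (σ x) ≤ ρ x)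
    (hw0 : ∀ x, 0 ≤ w x) (hwS : ∀ x ∉ S, w x = 0) (hw : ∀ x ∈ A, w (σ x) ≤ w x)
    (hpw : ∀ x ∈ A, p x ≤ w x) (hadd : ∀ x ∈ A, p x + p (σ x) ≤ w x + w (σ x))
    (hint : IntegrableOn (fun x ↦ ρ x * p x * w x) S μ)
    (hint_sq : IntegrableOn (fun x ↦ ρ x * w x ^ 2) S μ) :
    ∫ x in S, ρ x * p x * w x ∂μ ≤ ∫ x in S, ρ x * w x ^ 2 ∂μ := by
  have hpair : ∀ x ∈ A, ρ x * p x * w x + ρ (σ x) * p (σ x) * w (σ x) ≤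
      ρ x * w x ^ 2 + ρ (σ x) * w (σ x) ^ 2 := fun x hx ↦
    mul_mul_add_mul_mul_le_mul_sq_add_mul_sq (hρ0 _) (hρ x hx) (hw0 _) (hw x hx) (hpw x hx)
      (hadd x hx)
  have hzero : ∀ x ∉ S, ρ x * p x * w x = 0 := fun x hx ↦ by rw [hwS x hx, mul_zero]
  have hzero_sq : ∀ x ∉ S, ρ x * w x ^ 2 = 0 := fun x hx ↦ by
    rw [hwS x hx, zero_pow two_ne_zero, mul_zero]
  rw [setIntegral_eq_integral_of_forall_compl_eq_zero hzero,
    setIntegral_eq_integral_of_forall_compl_eq_zero hzero_sq]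
  refine integral_le_integral_of_add_comp_le hσ
    (hint.integrable_of_forall_notMem_eq_zero hzero)
    (hint_sq.integrable_of_forall_notMem_eq_zero hzero_sq) (.of_forall fun x ↦ ?_)
  by_cases hx : x ∈ A
  · exact hpair x hx
  · simpa only [hinv x, add_comm] using hpair (σ x) (hA x hx)

end MeasurePreserving

section Reflection

variable {n : ℕ} {e : EuclideanSpace ℝ (Fin n)}

lemma reflH_eq_reflection_add (he : ‖e‖ = 1) (c : ℝ) (x : EuclideanSpace ℝ (Fin n)) :
    reflH e c x = (ℝ ∙ e)ᗮ.reflection x + (2 * c) • e := by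
  rw [Submodule.reflection_orthogonal_apply, Submodule.reflection_singleton_apply, he,
    real_inner_comm, reflH]
  simp only [RCLike.ofReal_real_eq_id, id_eq, one_pow, div_one]
  module

lemma inner_reflH (he : ‖e‖ = 1) (c : ℝ) (x : EuclideanSpace ℝ (Fin n)) :
    ⟪reflH e c x, e⟫ = 2 * c - ⟪x, e⟫ := by
  rw [reflH, inner_sub_left, real_inner_smul_left, inner_self_eq_one_of_norm_eq_one he]
  ring

lemma involutive_reflH (he : ‖e‖ = 1) (c : ℝ) : Function.Involutive (reflH e c) := fun x ↦ by
  rw [reflH, inner_reflH he, reflH]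
  module

lemma measurePreserving_reflH (he : ‖e‖ = 1) (c : ℝ) : MeasurePreserving (reflH e c) := by
  rw [funext (reflH_eq_reflection_add he c)]
  exact (measurePreserving_add_right volume ((2 * c) • e)).comp
    (LinearIsometryEquiv.measurePreserving _)

lemma inner_reflH_le (he : ‖e‖ = 1) {c : ℝ} {x : EuclideanSpace ℝ (Fin n)}
    (hx : ¬ ⟪x, e⟫ ≤ c) : ⟪reflH e c x, e⟫ ≤ c := by
  rw [inner_reflH he]
  linarith

end Reflection

section Polarization

variable {n : ℕ} {e : EuclideanSpace ℝ (Fin n)} {c : ℝ} {v : EuclideanSpace ℝ (Fin n) → ℝ}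

lemma polarize_le_max (x : EuclideanSpace ℝ (Fin n)) :
    polarize e c v x ≤ max (v x) (v (reflH e c x)) := by
  unfold polarize
  split_ifs
  exacts [le_rfl, min_le_max]

lemma polarize_reflH_le (he : ‖e‖ = 1) {x : EuclideanSpace ℝ (Fin n)} (hx : ⟪x, e⟫ ≤ c) :
    polarize e c v (reflH e c x) ≤ polarize e c v x :=
  calc
    polarize e c v (reflH e c x) ≤ max (v (reflH e c x)) (v (reflH e c (reflH e c x))) :=
      polarize_le_max _
    _ = max (v x) (v (reflH e c x)) := by rw [involutive_reflH he, max_comm]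
    _ = polarize e c v x := (if_pos hx).symm

lemma memLp_polarize (he : ‖e‖ = 1) {q : ℝ≥0∞} (hv : MemLp v q) : MemLp (polarize e c v) q := by
  classical
  have hv_refl : MemLp (v ∘ reflH e c) q := hv.comp_measurePreserving (measurePreserving_reflH he c)
  have hhalf : MeasurableSet {x : EuclideanSpace ℝ (Fin n) | ⟪x, e⟫ ≤ c} :=
    measurableSet_le (by fun_prop) measurable_const
  exact MemLp.piecewise hhalf ((hv.sup hv_refl).restrict _) ((hv.inf hv_refl).restrict _)

end Polarization

section Density

variable {n : ℕ} {h H t : ℝ} {v : EuclideanSpace ℝ (Fin n) → ℝ}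

lemma rhoD_nonneg (hh : 0 ≤ h) (hH : 0 ≤ H) (x : EuclideanSpace ℝ (Fin n)) :
    0 ≤ rhoD h H t v x := by
  unfold rhoD
  split_ifs <;> assumption

lemma rhoD_le_rhoD (hH : h ≤ H) {x y : EuclideanSpace ℝ (Fin n)} (hxy : v x ≤ v y) :
    rhoD h H t v x ≤ rhoD h H t v y := by
  unfold rhoD
  split_ifs <;> linarith

lemma norm_rhoD_le (x : EuclideanSpace ℝ (Fin n)) : ‖rhoD h H t v x‖ ≤ max ‖h‖ ‖H‖ := by
  unfold rhoD
  split_ifs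
  exacts [le_max_left _ _, le_max_right _ _]

lemma integrable_rhoD_mul {μ : Measure (EuclideanSpace ℝ (Fin n))} (hv : AEMeasurable v μ)
    {f : EuclideanSpace ℝ (Fin n) → ℝ} (hf : Integrable f μ) :
    Integrable (fun x ↦ rhoD h H t v x * f x) μ := by
  have hstep : Measurable fun s : ℝ ↦ if s ≤ √t then h else H :=
    Measurable.ite measurableSet_Iic measurable_const measurable_const
  exact hf.bdd_mul (hstep.comp_aemeasurable hv).aestronglyMeasurable (.of_forall norm_rhoD_le)

end Density

lemma memLp_of_continuous_of_eq_zero_off_isBounded {X : Type*} [PseudoMetricSpace X] [ProperSpace X]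
    [MeasurableSpace X] [OpensMeasurableSpace X] {μ : Measure X} [IsFiniteMeasureOnCompacts μ]
    {E : Type*} [NormedAddCommGroup E] {f : X → E} (hf : Continuous f) {S : Set X}
    (hS : Bornology.IsBounded S) (hzero : ∀ x ∉ S, f x = 0) (q : ℝ≥0∞) : MemLp f q μ :=
  hf.memLp_of_hasCompactSupport <| .intro hS.isCompact_closure fun x hx ↦
    hzero x fun hxS ↦ hx (subset_closure hxS)

theorem statement14_general {n : ℕ} {e : EuclideanSpace ℝ (Fin n)} (he : ‖e‖ = 1) {c h H t : ℝ}
    (hh : 0 ≤ h) (hH : h ≤ H) {S : Set (EuclideanSpace ℝ (Fin n))}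
    {u w : EuclideanSpace ℝ (Fin n) → ℝ} (hu : MemLp u 2) (hw : MemLp w 2 (volume.restrict S))
    (hw0 : ∀ x, 0 ≤ w x) (hwS : ∀ x ∉ S, w x = 0)
    (hw_refl : ∀ x, ⟪x, e⟫ ≤ c → w (reflH e c x) ≤ w x)
    (hu_le : ∀ x, ⟪x, e⟫ ≤ c → polarize e c u x ≤ w x)
    (hadd : ∀ x, ⟪x, e⟫ ≤ c →
      polarize e c u x + polarize e c u (reflH e c x) ≤ w x + w (reflH e c x)) :
    ∫ x in S, rhoD h H t (polarize e c u) x * polarize e c u x * w x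
      ≤ ∫ x in S, rhoD h H t (polarize e c u) x * w x ^ 2 := by
  have hp : MemLp (polarize e c u) 2 (volume.restrict S) := (memLp_polarize he hu).restrict S
  have hint : IntegrableOn
      (fun x ↦ rhoD h H t (polarize e c u) x * polarize e c u x * w x) S := by
    simpa only [IntegrableOn, mul_assoc, Pi.mul_apply] using
      integrable_rhoD_mul hp.aemeasurable (hp.integrable_mul hw)
  exact setIntegral_mul_mul_le_setIntegral_mul_sq (A := {x | ⟪x, e⟫ ≤ c})
    (measurePreserving_reflH he c) (involutive_reflH he c) (fun _ ↦ inner_reflH_le he)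
    (rhoD_nonneg hh (hh.trans hH)) (fun _ hx ↦ rhoD_le_rhoD hH (polarize_reflH_le he hx))
    hw0 hwS hw_refl hu_le hadd hint (integrable_rhoD_mul hp.aemeasurable hw.integrable_sq)

/-- Key integral inequality: if `w ≥ 0` is measurable, square-integrable on the unit ball `B`,
vanishing outside `B`, and satisfies (i) `w(x) ≥ w(x̄)` for `x ∈ 𝓗`, (ii) `w(x) ≥ u_𝓗(x)` for
`x ∈ 𝓗`, (iii) `w(x)+w(x̄) ≥ u_𝓗(x)+u_𝓗(x̄)` for all `x`, then
`∫_B ρ_{u_𝓗} u_𝓗 w ≤ ∫_B ρ_{u_𝓗} w²`. -/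
theorem statement14 {n : ℕ} (e : EuclideanSpace ℝ (Fin n)) (he : ‖e‖ = 1) (c : ℝ) (hc : 0 < c)
    (h H t : ℝ) (hh : 0 ≤ h) (hH : h < H) (ht : 0 ≤ t)
    (u : EuclideanSpace ℝ (Fin n) → ℝ) (hcont : Continuous u)
    (hupos : ∀ x ∈ Metric.ball (0 : EuclideanSpace ℝ (Fin n)) 1, 0 < u x)
    (hu0 : ∀ x ∉ Metric.ball (0 : EuclideanSpace ℝ (Fin n)) 1, u x = 0)
    (w : EuclideanSpace ℝ (Fin n) → ℝ) (hwm : Measurable w) (hw0 : ∀ x, 0 ≤ w x)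
    (hwL2 : IntegrableOn (fun x => w x ^ 2) (Metric.ball (0 : EuclideanSpace ℝ (Fin n)) 1))
    (hwout : ∀ x ∉ Metric.ball (0 : EuclideanSpace ℝ (Fin n)) 1, w x = 0)
    (h1 : ∀ x : EuclideanSpace ℝ (Fin n), ⟪x, e⟫ ≤ c → w (reflH e c x) ≤ w x)
    (h2 : ∀ x : EuclideanSpace ℝ (Fin n), ⟪x, e⟫ ≤ c → polarize e c u x ≤ w x)
    (h3 : ∀ x : EuclideanSpace ℝ (Fin n),
      polarize e c u x + polarize e c u (reflH e c x) ≤ w x + w (reflH e c x)) :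
    ∫ x in Metric.ball (0 : EuclideanSpace ℝ (Fin n)) 1,
        rhoD h H t (polarize e c u) x * polarize e c u x * w x
      ≤ ∫ x in Metric.ball (0 : EuclideanSpace ℝ (Fin n)) 1,
        rhoD h H t (polarize e c u) x * w x ^ 2 :=
  statement14_general he hh hH.le
    (memLp_of_continuous_of_eq_zero_off_isBounded hcont Metric.isBounded_ball hu0 2)
    ((memLp_two_iff_integrable_sq hwm.aestronglyMeasurable).2 hwL2) hw0 hwout h1 h2 fun x _ ↦ h3 x
end
end
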